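/- arXiv:2604.28086 — 3 statements merged into one kernel-verified Lean document; each statement's English description precedes it below -/
import Mathlib

section
/- (Osgood criterion, estimate part.) Let T > 0, let ϑ : (0,∞) → (0,∞) be continuous and increasing with ϑ(s) → 0 as s → 0⁺, let φ : [0,T] → [0,∞) be integrable, and let U₀ > 0. Suppose U : [0,T] → (0,∞) is continuous and satisfies U(t) ≤ U₀ + ∫₀ᵗ φ(s) ϑ(U(s)) ds for all t ∈ [0,T]. Then for every t ∈ [0,T] with U(t) ≥ U₀ one has ∫_{U₀}^{U(t)} ds/ϑ(s) ≤ ∫₀ᵗ φ(s) ds. -/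
open MeasureTheory

/-!
Put `V t = U₀ + ∫₀ᵗ φ ϑ(U)`, a continuous nondecreasing majorant of `U` with `V 0 = U₀`, and
`F x = ∫_{U₀}^x 1/ϑ`. For `a ≤ b`, monotonicity of `ϑ` gives
`F (V b) - F (V a) ≤ (V b - V a) / ϑ (V a)` and `V b - V a ≤ ϑ (V b) ∫ₐᵇ φ`, hence
`F (V b) - F (V a) ≤ (ϑ (V b) / ϑ (V a)) ∫ₐᵇ φ`. By continuity the ratio is at most `1 + ε` for `b`
close to `a`, so the inequality `F (V t) ≤ (1 + ε) ∫₀ᵗ φ` propagates to the right from each point;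
it is a closed condition that holds at `0`, so it holds on `[0, T]`. Let `ε → 0` and use
`F (U t) ≤ F (V t)`. This avoids differentiating the merely absolutely continuous `V`.
-/

/-- Osgood criterion, estimate part. -/
theorem stmt_5 (T : ℝ) (hT : 0 < T) (ϑ : ℝ → ℝ)
    (hϑc : ContinuousOn ϑ (Set.Ioi 0))
    (hϑm : StrictMonoOn ϑ (Set.Ioi 0))
    (hϑpos : ∀ s : ℝ, 0 < s → 0 < ϑ s)
    (hϑ0 : Filter.Tendsto ϑ (nhdsWithin 0 (Set.Ioi 0)) (nhds 0))
    (φ : ℝ → ℝ) (hφint : IntegrableOn φ (Set.Icc 0 T))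
    (hφnn : ∀ t ∈ Set.Icc (0:ℝ) T, 0 ≤ φ t)
    (U₀ : ℝ) (hU₀ : 0 < U₀)
    (U : ℝ → ℝ) (hUc : ContinuousOn U (Set.Icc 0 T))
    (hUpos : ∀ t ∈ Set.Icc (0:ℝ) T, 0 < U t)
    (hUle : ∀ t ∈ Set.Icc (0:ℝ) T, U t ≤ U₀ + ∫ s in (0:ℝ)..t, φ s * ϑ (U s)) :
    ∀ t ∈ Set.Icc (0:ℝ) T, U₀ ≤ U t →
      (∫ s in U₀..(U t), 1 / ϑ s) ≤ ∫ s in (0:ℝ)..t, φ s := by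
  have hψint : IntegrableOn (fun s => φ s * ϑ (U s)) (Set.Icc 0 T) :=
    hφint.mul_continuousOn (hϑc.comp hUc fun t ht => hUpos t ht) isCompact_Icc
  have hii : ∀ f : ℝ → ℝ, IntegrableOn f (Set.Icc 0 T) →
      ∀ a ∈ Set.Icc (0:ℝ) T, ∀ b ∈ Set.Icc (0:ℝ) T, IntervalIntegrable f volume a b := by
    intro f hf a ha b hb
    exact (hf.mono_set (Set.uIcc_subset_Icc ha hb)).intervalIntegrable
  have hadd : ∀ f : ℝ → ℝ, IntegrableOn f (Set.Icc 0 T) →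
      ∀ a ∈ Set.Icc (0:ℝ) T, ∀ b ∈ Set.Icc (0:ℝ) T,
        (∫ s in (0:ℝ)..b, f s) - (∫ s in (0:ℝ)..a, f s) = ∫ s in a..b, f s := by
    intro f hf a ha b hb
    have h0 : (0:ℝ) ∈ Set.Icc (0:ℝ) T := ⟨le_rfl, hT.le⟩
    exact intervalIntegral.integral_interval_sub_left (hii f hf 0 h0 b hb) (hii f hf 0 h0 a ha)
  have hcont : ∀ f : ℝ → ℝ, IntegrableOn f (Set.Icc 0 T) →
      ContinuousOn (fun t => ∫ s in (0:ℝ)..t, f s) (Set.Icc 0 T) := by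
    intro f hf
    rw [← Set.uIcc_of_le hT.le] at hf ⊢
    exact intervalIntegral.continuousOn_primitive_interval hf
  obtain ⟨Φ, hΦ⟩ : ∃ Φ : ℝ → ℝ, Φ = fun t => ∫ s in (0:ℝ)..t, φ s := ⟨_, rfl⟩
  obtain ⟨V, hV⟩ : ∃ V : ℝ → ℝ, V = fun t => U₀ + ∫ s in (0:ℝ)..t, φ s * ϑ (U s) := ⟨_, rfl⟩
  obtain ⟨F, hF⟩ : ∃ F : ℝ → ℝ, F = fun x => ∫ s in U₀..x, 1 / ϑ s := ⟨_, rfl⟩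
  have hΦc : ContinuousOn Φ (Set.Icc 0 T) := hΦ ▸ hcont _ hφint
  have hVc : ContinuousOn V (Set.Icc 0 T) := hV ▸ continuousOn_const.add (hcont _ hψint)
  have hUV : ∀ t ∈ Set.Icc (0:ℝ) T, U t ≤ V t := fun t ht => by rw [hV]; exact hUle t ht
  have hΦsub : ∀ a ∈ Set.Icc (0:ℝ) T, ∀ b ∈ Set.Icc (0:ℝ) T, Φ b - Φ a = ∫ s in a..b, φ s := by
    intro a ha b hb
    simp only [hΦ, hadd _ hφint a ha b hb]
  have hVsub : ∀ a ∈ Set.Icc (0:ℝ) T, ∀ b ∈ Set.Icc (0:ℝ) T,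
      V b - V a = ∫ s in a..b, φ s * ϑ (U s) := by
    intro a ha b hb
    simp only [hV, ← hadd _ hψint a ha b hb]
    ring
  have hΦm : ∀ a ∈ Set.Icc (0:ℝ) T, ∀ b ∈ Set.Icc (0:ℝ) T, a ≤ b → Φ a ≤ Φ b := by
    intro a ha b hb hab
    rw [← sub_nonneg, hΦsub a ha b hb]
    exact intervalIntegral.integral_nonneg hab
      fun s hs => hφnn s ⟨ha.1.trans hs.1, hs.2.trans hb.2⟩
  have hVm : ∀ a ∈ Set.Icc (0:ℝ) T, ∀ b ∈ Set.Icc (0:ℝ) T, a ≤ b → V a ≤ V b := by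
    intro a ha b hb hab
    rw [← sub_nonneg, hVsub a ha b hb]
    refine intervalIntegral.integral_nonneg hab fun s hs => ?_
    have hs' : s ∈ Set.Icc (0:ℝ) T := ⟨ha.1.trans hs.1, hs.2.trans hb.2⟩
    exact mul_nonneg (hφnn s hs') (hϑpos _ (hUpos s hs')).le
  have h0mem : (0:ℝ) ∈ Set.Icc (0:ℝ) T := ⟨le_rfl, hT.le⟩
  have hV0 : V 0 = U₀ := by simp [hV]
  have hΦ0 : Φ 0 = 0 := by simp [hΦ]
  have hFU₀ : F U₀ = 0 := by simp [hF]
  have hVpos : ∀ t ∈ Set.Icc (0:ℝ) T, 0 < V t := fun t ht => (hUpos t ht).trans_le (hUV t ht)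
  have hinvc : ContinuousOn (fun s => 1 / ϑ s) (Set.Ioi 0) :=
    continuousOn_const.div hϑc fun s hs => (hϑpos s hs).ne'
  have hinvi : ∀ x y : ℝ, 0 < x → 0 < y →
      IntervalIntegrable (fun s => 1 / ϑ s) volume x y := by
    intro x y hx hy
    refine (hinvc.mono fun s hs => ?_).intervalIntegrable
    exact (lt_min hx hy).trans_le hs.1
  have hFc : ContinuousOn F (Set.Ioi 0) := by
    intro x hx
    rw [hF]
    exact (intervalIntegral.integral_hasDerivAt_right (hinvi U₀ x hU₀ hx)
      (hinvc.stronglyMeasurableAtFilter isOpen_Ioi x hx)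
      (hinvc.continuousAt (Ioi_mem_nhds hx))).continuousAt.continuousWithinAt
  have hFsub : ∀ x y : ℝ, 0 < x → 0 < y → F y - F x = ∫ s in x..y, 1 / ϑ s := by
    intro x y hx hy
    simp only [hF]
    exact intervalIntegral.integral_interval_sub_left (hinvi _ _ hU₀ hy) (hinvi _ _ hU₀ hx)
  have hFm : ∀ x y : ℝ, 0 < x → x ≤ y → F x ≤ F y := by
    intro x y hx hxy
    rw [← sub_nonneg, hFsub x y hx (hx.trans_le hxy)]
    exact intervalIntegral.integral_nonneg hxy
      fun s hs => (one_div_pos.2 (hϑpos s (hx.trans_le hs.1))).le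
  have hFle : ∀ x y : ℝ, 0 < x → x ≤ y → F y - F x ≤ (y - x) / ϑ x := by
    intro x y hx hxy
    rw [hFsub x y hx (hx.trans_le hxy)]
    have h := intervalIntegral.integral_mono_on hxy (hinvi x y hx (hx.trans_le hxy))
      (intervalIntegrable_const (c := 1 / ϑ x)) fun s hs =>
        one_div_le_one_div_of_le (hϑpos x hx)
          (hϑm.monotoneOn hx (hx.trans_le hs.1) hs.1)
    rw [intervalIntegral.integral_const, smul_eq_mul, mul_one_div] at h
    exact h
  have hVle : ∀ a ∈ Set.Icc (0:ℝ) T, ∀ b ∈ Set.Icc (0:ℝ) T, a ≤ b →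
      V b - V a ≤ ϑ (V b) * (Φ b - Φ a) := by
    intro a ha b hb hab
    rw [hVsub a ha b hb, hΦsub a ha b hb, ← intervalIntegral.integral_const_mul]
    refine intervalIntegral.integral_mono_on hab (hii _ hψint a ha b hb)
      ((hii _ hφint a ha b hb).const_mul _) fun s hs => ?_
    have hs' : s ∈ Set.Icc (0:ℝ) T := ⟨ha.1.trans hs.1, hs.2.trans hb.2⟩
    rw [mul_comm]
    exact mul_le_mul_of_nonneg_right (hϑm.monotoneOn (hUpos s hs') (hVpos b hb)
      ((hUV s hs').trans (hVm s hs' b hb hs.2))) (hφnn s hs')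
  have hϑVc : ContinuousOn (fun t => ϑ (V t)) (Set.Icc 0 T) := hϑc.comp hVc hVpos
  have key : ∀ ε : ℝ, 0 < ε → ∀ t ∈ Set.Icc (0:ℝ) T, F (V t) ≤ (1 + ε) * Φ t := by
    intro ε hε
    have hclosed : IsClosed ({t | F (V t) ≤ (1 + ε) * Φ t} ∩ Set.Icc 0 T) := by
      have := isClosed_Icc.isClosed_le (hFc.comp hVc hVpos) (hΦc.const_smul (1 + ε))
      convert this using 1
      ext t
      simp [and_comm]
    refine hclosed.Icc_subset_of_forall_exists_gt (by simp [hV0, hΦ0, hFU₀]) ?_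
    rintro a ⟨hFa, ha⟩ y hy
    have ha' : a ∈ Set.Icc (0:ℝ) T := Set.Ico_subset_Icc_self ha
    have hpos := hϑpos _ (hVpos a ha')
    have hev : ∀ᶠ b in nhdsWithin a (Set.Ioi a), ϑ (V b) < (1 + ε) * ϑ (V a) := by
      have h1 : nhdsWithin a (Set.Ioi a) ≤ nhdsWithin a (Set.Icc 0 T) := by
        rw [← nhdsWithin_Ioc_eq_nhdsGT ha.2]
        exact nhdsWithin_mono _ fun s hs => ⟨ha.1.trans hs.1.le, hs.2⟩
      exact ((hϑVc a ha').mono_left h1).eventually_lt_const (by nlinarith)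
    obtain ⟨b, hb1, hb2⟩ := (hev.and (Ioc_mem_nhdsGT (lt_min hy ha.2))).exists
    have hb : b ∈ Set.Icc (0:ℝ) T := ⟨ha.1.trans hb2.1.le, hb2.2.trans (min_le_right _ _)⟩
    refine ⟨b, ?_, hb2.1, hb2.2.trans (min_le_left _ _)⟩
    have hstep : F (V b) - F (V a) ≤ (1 + ε) * (Φ b - Φ a) := by
      refine (hFle _ _ (hVpos a ha') (hVm a ha' b hb hb2.1.le)).trans ?_
      rw [div_le_iff₀ hpos]
      have h2 := hVle a ha' b hb hb2.1.le
      have h3 := mul_le_mul_of_nonneg_right hb1.le (sub_nonneg.2 (hΦm a ha' b hb hb2.1.le))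
      linarith
    have hFa' : F (V a) ≤ (1 + ε) * Φ a := hFa
    change F (V b) ≤ (1 + ε) * Φ b
    linarith
  intro t ht _
  have hgoal : F (U t) ≤ Φ t := by
    refine (hFm _ _ (hUpos t ht) (hUV t ht)).trans ?_
    have hlim : Filter.Tendsto (fun ε : ℝ => (1 + ε) * Φ t) (nhdsWithin 0 (Set.Ioi 0))
        (nhds (Φ t)) := by
      have hc : Continuous fun ε : ℝ => (1 + ε) * Φ t := by fun_prop
      simpa using (hc.tendsto 0).mono_left nhdsWithin_le_nhds
    exact ge_of_tendsto hlim (eventually_nhdsWithin_of_forall fun ε hε => key ε hε t ht)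
  simpa only [hF, hΦ] using hgoal
end

section
/- (Power-like criterion.) Let m > 1, let T > 0, let φ : [0,T] → [0,∞) be integrable, and let U₀ > 0. Suppose (m−1)·∫₀ᵀ φ(s) ds < U₀^{1−m}, and suppose U : [0,T] → (0,∞) is continuous and satisfies U(t) = U₀ + ∫₀ᵗ φ(s) (U(s))^m ds for all t ∈ [0,T]. Then for every t ∈ [0,T] one has (U(t))^{1−m} + (m−1)∫₀ᵗ φ(s) ds = U₀^{1−m}. -/
open MeasureTheory

/-!
The solution `U` agrees on `[0, T]` with the primitive `V t = U₀ + ∫₀ᵗ φ U ^ m`, which is absolutely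
continuous. Its values there lie in a compact interval of `(0, ∞)`, on which `x ↦ x ^ (1 - m)` is
Lipschitz, so `V ^ (1 - m)` is absolutely continuous as well
(`LipschitzOnWith.comp_absolutelyContinuousOnInterval`). By Lebesgue differentiation, at almost every
point `V' = φ V ^ m`, so `(V ^ (1 - m))' = (1 - m) φ V ^ m V ^ (-m) = -(m - 1) φ`. Hence
`V ^ (1 - m) + (m - 1) ∫₀ᵗ φ` is absolutely continuous with zero derivative almost everywhere, and
is therefore constant, with value `U₀ ^ (1 - m)` at `t = 0`.
-/

open Set in
/-- A Lipschitz function of an absolutely continuous function is absolutely continuous; the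
Lipschitz bound is only needed on a set containing the values of the inner function. -/
lemma LipschitzOnWith.comp_absolutelyContinuousOnInterval {g f : ℝ → ℝ} {K : NNReal} {s : Set ℝ}
    {a b : ℝ} (hg : LipschitzOnWith K g s) (hf : AbsolutelyContinuousOnInterval f a b)
    (hfs : MapsTo f (uIcc a b) s) :
    AbsolutelyContinuousOnInterval (fun x => g (f x)) a b := by
  rw [absolutelyContinuousOnInterval_iff] at hf ⊢
  intro ε hε
  -- `K + 1` instead of `K` avoids dividing by zero.
  obtain ⟨δ, hδ, h⟩ := hf (ε / (K + 1)) (by positivity)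
  refine ⟨δ, hδ, fun E hE hEδ => ?_⟩
  have hsum := h E hE hEδ
  rw [lt_div_iff₀ (by positivity)] at hsum
  refine lt_of_le_of_lt ?_ hsum
  rw [Finset.sum_mul]
  refine Finset.sum_le_sum fun i hi => ?_
  have hdist := hg.dist_le_mul _ (hfs (hE.1 i hi).1) _ (hfs (hE.1 i hi).2)
  nlinarith [dist_nonneg (x := f (E.2 i).1) (y := f (E.2 i).2)]

/-- Power-like criterion: the implicit formula for solutions of
`U(t) = U₀ + ∫₀ᵗ φ(s) U(s)^m ds` with `m > 1`. -/
theorem stmt_8 (m : ℝ) (hm : 1 < m) (T : ℝ) (hT : 0 < T)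
    (φ : ℝ → ℝ) (hφint : IntegrableOn φ (Set.Icc 0 T))
    (hφnn : ∀ t ∈ Set.Icc (0:ℝ) T, 0 ≤ φ t)
    (U₀ : ℝ) (hU₀ : 0 < U₀)
    (hhorizon : (m - 1) * (∫ s in (0:ℝ)..T, φ s) < U₀ ^ (1 - m))
    (U : ℝ → ℝ) (hUc : ContinuousOn U (Set.Icc 0 T))
    (hUpos : ∀ t ∈ Set.Icc (0:ℝ) T, 0 < U t)
    (hUeq : ∀ t ∈ Set.Icc (0:ℝ) T, U t = U₀ + ∫ s in (0:ℝ)..t, φ s * U s ^ m) :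
    ∀ t ∈ Set.Icc (0:ℝ) T,
      U t ^ (1 - m) + (m - 1) * (∫ s in (0:ℝ)..t, φ s) = U₀ ^ (1 - m) := by
  have huIcc : Set.uIcc 0 T = Set.Icc 0 T := Set.uIcc_of_le hT.le
  have hne : (Set.Icc 0 T).Nonempty := ⟨0, le_rfl, hT.le⟩
  obtain ⟨p, hp, hpmin⟩ := isCompact_Icc.exists_isMinOn hne hUc
  obtain ⟨q, hq, hqmax⟩ := isCompact_Icc.exists_isMaxOn hne hUc
  have hφ : IntervalIntegrable φ volume 0 T :=
    (intervalIntegrable_iff_integrableOn_Icc_of_le hT.le).2 hφint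
  have hφU : IntervalIntegrable (fun s => φ s * U s ^ m) volume 0 T := by
    refine hφ.mul_continuousOn ?_
    rw [huIcc]
    exact hUc.rpow_const fun x hx => Or.inl (hUpos x hx).ne'
  let V : ℝ → ℝ := fun t => U₀ + ∫ s in (0:ℝ)..t, φ s * U s ^ m
  have hVU : ∀ t ∈ Set.Icc 0 T, V t = U t := fun t ht => (hUeq t ht).symm
  have hI := hφU.absolutelyContinuousOnInterval_intervalIntegral (c := 0) (by simp)
  have hVac : AbsolutelyContinuousOnInterval V 0 T :=
    ((LipschitzWith.const U₀).lipschitzOnWith.absolutelyContinuousOnInterval).add hI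
  have hsmooth : ContDiffOn ℝ 1 (fun x : ℝ => x ^ (1 - m)) (Set.Icc (U p) (U q)) := fun x hx =>
    (Real.contDiffAt_rpow_const_of_ne ((hUpos p hp).trans_le hx.1).ne').contDiffWithinAt
  obtain ⟨K, hK⟩ := hsmooth.exists_lipschitzOnWith (by decide) (convex_Icc _ _) isCompact_Icc
  have hpow : AbsolutelyContinuousOnInterval (fun t => V t ^ (1 - m)) 0 T := by
    refine hK.comp_absolutelyContinuousOnInterval hVac fun t ht => ?_
    rw [huIcc] at ht
    rw [hVU t ht]
    exact ⟨hpmin ht, hqmax ht⟩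
  have hFac := hpow.add
    ((hφ.absolutelyContinuousOnInterval_intervalIntegral (c := 0) (by simp)).const_mul (m - 1))
  obtain ⟨C, hC⟩ := hFac.const_of_ae_hasDerivAt_zero (by
    filter_upwards [hφU.ae_hasDerivAt_integral, hφ.ae_hasDerivAt_integral] with x hx₁ hx₂ hx
    have hxI : x ∈ Set.Icc 0 T := huIcc ▸ hx
    have hVpos : 0 < V x := by rw [hVU x hxI]; exact hUpos x hxI
    have hV' : HasDerivAt V (φ x * U x ^ m) x := (hx₁ hx 0 (by simp)).const_add U₀
    refine ((hV'.rpow_const (p := 1 - m) (Or.inl hVpos.ne')).add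
      ((hx₂ hx 0 (by simp)).const_mul (m - 1))).congr_deriv ?_
    have hcancel : U x ^ m * U x ^ (1 - m - 1) = 1 := by
      rw [← Real.rpow_add (hUpos x hxI)]
      simp
    rw [hVU x hxI]
    linear_combination φ x * (1 - m) * hcancel)
  intro t ht
  have h0 := hC 0 (by simp)
  have h1 := hC t (huIcc ▸ ht)
  simp only [Pi.add_apply, hVU t ht] at h1
  simp [V] at h0
  rw [h1, h0]
end

section
/- (Convergence of successive approximations.) Let X be a Banach space and T > 0. Let K : [0,T] × [0,∞) → [0,∞) be such that t ↦ K(t,U) is integrable on [0,T] for each fixed U ≥ 0 and, for almost every t, U ↦ K(t,U) is continuous and nondecreasing with K(t,0) = 0. Let U₀ ≥ 0 and assume: (a2) there exists a continuous function U* : [0,T] → [0,∞) with U*(t) = U₀ + ∫₀ᵗ K(s, U*(s)) ds for all t ∈ [0,T]; (a3) the only continuous nonnegative function W : [0,T] → [0,∞) with W(t) ≤ ∫₀ᵗ K(s, W(s)) ds for all t ∈ [0,T] is W ≡ 0. Let G be a map from C([0,T];X) to itself and x₀ ∈ X with ‖x₀‖ ≤ U₀ such that, for all u, v ∈ C([0,T];X)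 and all t ∈ [0,T]: (i) ‖Gu(t) − Gv(t)‖ ≤ ∫₀ᵗ K(s, sup_{0≤r≤s}‖u(r) − v(r)‖) ds, and (ii) ‖Gu(t)‖ ≤ U₀ + ∫₀ᵗ K(s, sup_{0≤r≤s}‖u(r)‖) ds. Define the Picard iterates u₀(t) ≡ x₀ and u_{n+1} = G u_n. Then (u_n) converges uniformly on [0,T] to the unique fixed point u of G in C([0,T];X), and sup_{0≤r≤t}‖u(r)‖ ≤ U*(t) for all t ∈ [0,T]. -/
/-!
The scalar inequality `W ≤ ∫ K(s, W)` controls the differences of the iterates. Write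
`S u t = sup_{0 ≤ r ≤ t} ‖u r‖` (`runSup`). Since `U*` is nondecreasing, (ii) gives
`S uₙ ≤ U*` for all `n` by induction. The tails
`wₖ(t) = sup_{n, m ≥ k} S(uₙ - uₘ)(t)` are therefore bounded, and (i) gives
`wₖ₊₁(t) ≤ ∫₀ᵗ K(s, wₖ(s)) ds`. They decrease in `k` to a limit `w`, and dominated convergence
yields `w(t) ≤ ∫₀ᵗ K(s, w(s)) ds`.

The limit `w` need not be continuous a priori, so (a3) is applied to the continuous function
`W(t) = ∫₀ᵗ K(s, w(s)) ds` instead: from `w ≤ W` and monotonicity of `K` one gets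
`W ≤ ∫ K(s, W)`, hence `W = 0` and `w = 0`. So `(uₙ)` is Cauchy for the sup norm. Its limit is a
fixed point by (i) and dominated convergence; uniqueness follows from the same
continuity-free form of (a3), `Majorant.eq_zero_of_le`, applied to `S(v - u)`.

All integrals are genuine (not junk values) because `K(s, w(s))` is measurable for measurable `w`
by the Carathéodory property and is dominated by `K(s, M)` whenever `0 ≤ w ≤ M`.
-/

open MeasureTheory Set Filter Topology

/-- The standing assumptions on the kernel `K` on `[0,T]`: nonnegative, integrable in time, and for
almost every time continuous, nondecreasing and vanishing at `0` in the second variable. -/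
structure Majorant (T : ℝ) (K : ℝ → ℝ → ℝ) : Prop where
  nonneg : ∀ t ∈ Icc (0:ℝ) T, ∀ U : ℝ, 0 ≤ U → 0 ≤ K t U
  integrable : ∀ U : ℝ, 0 ≤ U → IntegrableOn (fun t => K t U) (Icc 0 T)
  ae : ∀ᵐ t ∂(volume.restrict (Icc (0:ℝ) T)),
      ContinuousOn (K t) (Ici 0) ∧ MonotoneOn (K t) (Ici 0) ∧ K t 0 = 0

namespace Majorant

variable {T : ℝ} {K : ℝ → ℝ → ℝ}

/-- Carathéodory measurability: `K(s, w(s))` is the a.e. limit of `K(s, ⌊w(s) n⌋ / n)`, and each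
of these only involves the countably many sections `K(·, k / n)`. -/
theorem aestronglyMeasurable_comp (hK : Majorant T K) {w : ℝ → ℝ}
    (hw : AEMeasurable w (volume.restrict (Icc 0 T))) (h0 : ∀ s ∈ Icc 0 T, 0 ≤ w s) :
    AEStronglyMeasurable (fun s => K s (w s)) (volume.restrict (Icc 0 T)) := by
  refine aestronglyMeasurable_of_tendsto_ae atTop
    (f := fun (n : ℕ) s => K s ((⌊w s * n⌋₊ : ℝ) / n)) ?_ ?_
  · intro n
    have hm (k : ℕ) : AEMeasurable (fun s => K s ((k : ℝ) / n)) (volume.restrict (Icc 0 T)) :=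
      (hK.integrable _ (by positivity)).aestronglyMeasurable.aemeasurable
    have hun : Measurable (fun p : ℝ × ℕ => (hm p.2).mk _ p.1) :=
      measurable_from_prod_countable_left fun k => (hm k).measurable_mk
    have hfl : AEMeasurable (fun s => (s, ⌊w s * n⌋₊)) (volume.restrict (Icc 0 T)) :=
      aemeasurable_id.prodMk (Nat.measurable_floor.comp_aemeasurable (hw.mul_const _))
    refine AEMeasurable.aestronglyMeasurable ((hun.comp_aemeasurable hfl).congr ?_)
    filter_upwards [ae_all_iff.2 fun k => (hm k).ae_eq_mk] with s hs
    exact (hs _).symm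
  · filter_upwards [hK.ae, ae_restrict_mem measurableSet_Icc] with s hs hsT
    have hlim : Tendsto (fun n : ℕ => (⌊w s * n⌋₊ : ℝ) / n) atTop (𝓝 (w s)) :=
      (tendsto_nat_floor_mul_div_atTop (h0 s hsT)).comp tendsto_natCast_atTop_atTop
    exact (hs.1 (w s) (h0 s hsT)).tendsto.comp
      (tendsto_nhdsWithin_iff.2 ⟨hlim, Eventually.of_forall fun n => mem_Ici.2 (by positivity)⟩)

theorem ae_norm_le (hK : Majorant T K) {w : ℝ → ℝ} {M : ℝ}
    (h0 : ∀ s ∈ Icc 0 T, 0 ≤ w s) (hM : ∀ s ∈ Icc 0 T, w s ≤ M) :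
    ∀ᵐ s ∂(volume.restrict (Icc 0 T)), ‖K s (w s)‖ ≤ K s M := by
  filter_upwards [hK.ae, ae_restrict_mem measurableSet_Icc] with s hs hsT
  rw [Real.norm_of_nonneg (hK.nonneg s hsT _ (h0 s hsT))]
  exact hs.2.1 (h0 s hsT) ((h0 s hsT).trans (hM s hsT)) (hM s hsT)

theorem integrableOn_comp (hK : Majorant T K) (hT : 0 < T) {w : ℝ → ℝ} {M : ℝ}
    (hw : AEMeasurable w (volume.restrict (Icc 0 T)))
    (h0 : ∀ s ∈ Icc 0 T, 0 ≤ w s) (hM : ∀ s ∈ Icc 0 T, w s ≤ M) :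
    IntegrableOn (fun s => K s (w s)) (Icc 0 T) :=
  have h : (0:ℝ) ∈ Icc 0 T := ⟨le_rfl, hT.le⟩
  (hK.integrable M ((h0 0 h).trans (hM 0 h))).mono' (hK.aestronglyMeasurable_comp hw h0)
    (hK.ae_norm_le h0 hM)

theorem integral_nonneg (hK : Majorant T K) {w : ℝ → ℝ} (h0 : ∀ s ∈ Icc 0 T, 0 ≤ w s)
    {t : ℝ} (ht : t ∈ Icc 0 T) : 0 ≤ ∫ s in (0:ℝ)..t, K s (w s) :=
  intervalIntegral.integral_nonneg ht.1 fun s hs =>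
    hK.nonneg s ⟨hs.1, hs.2.trans ht.2⟩ _ (h0 s ⟨hs.1, hs.2.trans ht.2⟩)

/-- The operator `w ↦ ∫₀ᵗ K(s, w(s)) ds` is monotone both in `w` and in `t`. -/
theorem integral_mono (hK : Majorant T K) (hT : 0 < T) {w w' : ℝ → ℝ} {M : ℝ}
    (hw : AEMeasurable w (volume.restrict (Icc 0 T)))
    (hw' : AEMeasurable w' (volume.restrict (Icc 0 T)))
    (h0 : ∀ s ∈ Icc 0 T, 0 ≤ w s) (hle : ∀ s ∈ Icc 0 T, w s ≤ w' s)
    (hM : ∀ s ∈ Icc 0 T, w' s ≤ M) {r t : ℝ} (hr : 0 ≤ r) (hrt : r ≤ t) (ht : t ≤ T) :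
    ∫ s in (0:ℝ)..r, K s (w s) ≤ ∫ s in (0:ℝ)..t, K s (w' s) := by
  have h0' : ∀ s ∈ Icc 0 T, 0 ≤ w' s := fun s hs => (h0 s hs).trans (hle s hs)
  have hi := hK.integrableOn_comp hT hw h0 (fun s hs => (hle s hs).trans (hM s hs))
  have hi' := hK.integrableOn_comp hT hw' h0' hM
  have hsub : Ioc 0 t ⊆ Icc 0 T := fun s hs => ⟨hs.1.le, hs.2.trans ht⟩
  have hsub' : Ioc 0 r ⊆ Ioc 0 t := Ioc_subset_Ioc_right hrt
  rw [intervalIntegral.integral_of_le hr, intervalIntegral.integral_of_le (hr.trans hrt)]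
  refine (setIntegral_mono_set (hi.mono_set hsub) ?_ hsub'.eventuallyLE).trans ?_
  · filter_upwards [ae_restrict_mem measurableSet_Ioc] with s hs
    exact hK.nonneg s (hsub hs) _ (h0 s (hsub hs))
  · refine setIntegral_mono_ae_restrict (hi.mono_set hsub) (hi'.mono_set hsub) ?_
    filter_upwards [ae_restrict_of_ae_restrict_of_subset hsub hK.ae,
      ae_restrict_mem measurableSet_Ioc] with s hs hsT
    exact hs.2.1 (h0 s (hsub hsT)) (h0' s (hsub hsT)) (hle s (hsub hsT))

theorem tendsto_integral (hK : Majorant T K) {w : ℕ → ℝ → ℝ} {w' : ℝ → ℝ} {M : ℝ}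
    (hw : ∀ n, AEMeasurable (w n) (volume.restrict (Icc 0 T)))
    (h0 : ∀ n, ∀ s ∈ Icc 0 T, 0 ≤ w n s) (hM : ∀ n, ∀ s ∈ Icc 0 T, w n s ≤ M)
    (hlim : ∀ s ∈ Icc 0 T, Tendsto (fun n => w n s) atTop (𝓝 (w' s)))
    {t : ℝ} (ht : t ∈ Icc 0 T) :
    Tendsto (fun n => ∫ s in (0:ℝ)..t, K s (w n s)) atTop (𝓝 (∫ s in (0:ℝ)..t, K s (w' s))) := by
  have hsub : Ioc 0 t ⊆ Icc 0 T := fun s hs => ⟨hs.1.le, hs.2.trans ht.2⟩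
  have hM0 : 0 ≤ M := (h0 0 t ht).trans (hM 0 t ht)
  simp only [intervalIntegral.integral_of_le ht.1]
  refine tendsto_integral_of_dominated_convergence (fun s => K s M)
    (fun n => (hK.aestronglyMeasurable_comp (hw n) (h0 n)).mono_measure
      (Measure.restrict_mono hsub le_rfl)) ((hK.integrable M hM0).mono_set hsub)
    (fun n => ae_restrict_of_ae_restrict_of_subset hsub (hK.ae_norm_le (h0 n) (hM n))) ?_
  filter_upwards [ae_restrict_of_ae_restrict_of_subset hsub hK.ae,
    ae_restrict_mem measurableSet_Ioc] with s hs hsT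
  have h0' : 0 ≤ w' s := ge_of_tendsto' (hlim s (hsub hsT)) fun n => h0 n s (hsub hsT)
  exact (hs.1 (w' s) h0').tendsto.comp (tendsto_nhdsWithin_iff.2
    ⟨hlim s (hsub hsT), Eventually.of_forall fun n => h0 n s (hsub hsT)⟩)

/-- Uniqueness for the scalar inequality extends from continuous to bounded measurable functions,
by passing to the continuous majorant `t ↦ ∫₀ᵗ K(s, w(s)) ds`. -/
theorem eq_zero_of_le (hK : Majorant T K) (hT : 0 < T)
    (ha3 : ∀ W : ℝ → ℝ, ContinuousOn W (Icc 0 T) →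
      (∀ t ∈ Icc (0:ℝ) T, 0 ≤ W t) →
      (∀ t ∈ Icc (0:ℝ) T, W t ≤ ∫ s in (0:ℝ)..t, K s (W s)) →
      ∀ t ∈ Icc (0:ℝ) T, W t = 0)
    {w : ℝ → ℝ} {M : ℝ} (hw : AEMeasurable w (volume.restrict (Icc 0 T)))
    (h0 : ∀ s ∈ Icc 0 T, 0 ≤ w s) (hM : ∀ s ∈ Icc 0 T, w s ≤ M)
    (hle : ∀ t ∈ Icc 0 T, w t ≤ ∫ s in (0:ℝ)..t, K s (w s)) :
    ∀ t ∈ Icc 0 T, w t = 0 := by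
  have hc : ContinuousOn (fun t => ∫ s in (0:ℝ)..t, K s (w s)) (Icc 0 T) := by
    have := intervalIntegral.continuousOn_primitive_interval (a := 0) (b := T) (μ := volume)
      (f := fun s => K s (w s)) (by rw [uIcc_of_le hT.le]; exact hK.integrableOn_comp hT hw h0 hM)
    rwa [uIcc_of_le hT.le] at this
  have hW0 := ha3 _ hc (fun t ht => hK.integral_nonneg h0 ht) fun t ht =>
    hK.integral_mono hT hw (hc.aemeasurable measurableSet_Icc) h0 hle
      (fun s hs => hK.integral_mono hT hw hw h0 (fun _ _ => le_rfl) hM hs.1 hs.2 le_rfl)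
      ht.1 le_rfl ht.2
  exact fun t ht => le_antisymm ((hle t ht).trans (hW0 t ht).le) (h0 t ht)

end Majorant

section RunSup

variable {X : Type*} [NormedAddCommGroup X] {T : ℝ} (hT : 0 ≤ T)

/-- The running supremum `sup_{0 ≤ r ≤ t} ‖u r‖`, with `u` extended to `ℝ` by its endpoint values;
it is `0` for `t < 0`. -/
noncomputable def runSup (u : C(Icc (0:ℝ) T, X)) (t : ℝ) : ℝ :=
  ⨆ r : Icc (0:ℝ) t, ‖u (projIcc 0 T hT ↑r)‖

theorem runSup_nonneg (u : C(Icc (0:ℝ) T, X)) (t : ℝ) : 0 ≤ runSup hT u t :=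
  Real.iSup_nonneg fun _ => norm_nonneg _

theorem runSup_le (u : C(Icc (0:ℝ) T, X)) {t B : ℝ} (ht : t ≤ T) (hB : 0 ≤ B)
    (h : ∀ r : Icc (0:ℝ) T, (r : ℝ) ≤ t → ‖u r‖ ≤ B) : runSup hT u t ≤ B :=
  Real.iSup_le (fun r => h _ (by
    rw [projIcc_of_mem hT ⟨r.2.1, r.2.2.trans ht⟩]; exact r.2.2)) hB

theorem runSup_le_norm (u : C(Icc (0:ℝ) T, X)) (t : ℝ) : runSup hT u t ≤ ‖u‖ :=
  Real.iSup_le (fun _ => u.norm_coe_le_norm _) (norm_nonneg _)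

theorem norm_le_runSup (u : C(Icc (0:ℝ) T, X)) {t : ℝ} (r : Icc (0:ℝ) T) (h : (r : ℝ) ≤ t) :
    ‖u r‖ ≤ runSup hT u t := by
  have hb : BddAbove (range fun r : Icc (0:ℝ) t => ‖u (projIcc 0 T hT ↑r)‖) :=
    ⟨‖u‖, by rintro _ ⟨x, rfl⟩; exact u.norm_coe_le_norm _⟩
  have := le_ciSup hb ⟨r, r.2.1, h⟩
  simpa only [projIcc_val, runSup] using this

theorem runSup_mono (u : C(Icc (0:ℝ) T, X)) : Monotone (runSup hT u) := fun s t hst =>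
  Real.iSup_le (fun r => le_ciSup (f := fun r : Icc (0:ℝ) t => ‖u (projIcc 0 T hT ↑r)‖)
    ⟨‖u‖, by rintro _ ⟨x, rfl⟩; exact u.norm_coe_le_norm _⟩ ⟨r, r.2.1, r.2.2.trans hst⟩)
    (runSup_nonneg hT u t)

theorem runSup_aemeasurable (u : C(Icc (0:ℝ) T, X)) (μ : Measure ℝ) :
    AEMeasurable (runSup hT u) μ := (runSup_mono hT u).measurable.aemeasurable

end RunSup

/-- Convergence of the Picard successive approximations to the unique fixed point,
with the scalar comparison estimate. -/
theorem stmt_19 (X : Type*) [NormedAddCommGroup X] [NormedSpace ℝ X] [CompleteSpace X]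
    (T : ℝ) (hT : 0 < T) (K : ℝ → ℝ → ℝ)
    (hKnn : ∀ t ∈ Set.Icc (0:ℝ) T, ∀ U : ℝ, 0 ≤ U → 0 ≤ K t U)
    (hKint : ∀ U : ℝ, 0 ≤ U → IntegrableOn (fun t => K t U) (Set.Icc 0 T))
    (hKae : ∀ᵐ t ∂(volume.restrict (Set.Icc (0:ℝ) T)),
      ContinuousOn (K t) (Set.Ici 0) ∧ MonotoneOn (K t) (Set.Ici 0) ∧ K t 0 = 0)
    (U₀ : ℝ) (hU₀ : 0 ≤ U₀)
    (Ustar : ℝ → ℝ) (hUstarc : ContinuousOn Ustar (Set.Icc 0 T))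
    (hUstarnn : ∀ t ∈ Set.Icc (0:ℝ) T, 0 ≤ Ustar t)
    (ha2 : ∀ t ∈ Set.Icc (0:ℝ) T, Ustar t = U₀ + ∫ s in (0:ℝ)..t, K s (Ustar s))
    (ha3 : ∀ W : ℝ → ℝ, ContinuousOn W (Set.Icc 0 T) →
      (∀ t ∈ Set.Icc (0:ℝ) T, 0 ≤ W t) →
      (∀ t ∈ Set.Icc (0:ℝ) T, W t ≤ ∫ s in (0:ℝ)..t, K s (W s)) →
      ∀ t ∈ Set.Icc (0:ℝ) T, W t = 0)
    (G : C(Set.Icc (0:ℝ) T, X) → C(Set.Icc (0:ℝ) T, X))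
    (x₀ : X) (hx₀ : ‖x₀‖ ≤ U₀)
    (hGi : ∀ u v : C(Set.Icc (0:ℝ) T, X), ∀ t : Set.Icc (0:ℝ) T,
      ‖G u t - G v t‖ ≤ ∫ s in (0:ℝ)..(t : ℝ),
        K s (⨆ r : Set.Icc (0:ℝ) s,
          ‖u (Set.projIcc 0 T hT.le ↑r) - v (Set.projIcc 0 T hT.le ↑r)‖))
    (hGii : ∀ u : C(Set.Icc (0:ℝ) T, X), ∀ t : Set.Icc (0:ℝ) T,
      ‖G u t‖ ≤ U₀ + ∫ s in (0:ℝ)..(t : ℝ),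
        K s (⨆ r : Set.Icc (0:ℝ) s, ‖u (Set.projIcc 0 T hT.le ↑r)‖))
    (useq : ℕ → C(Set.Icc (0:ℝ) T, X))
    (h0 : useq 0 = ContinuousMap.const _ x₀)
    (hsucc : ∀ n, useq (n + 1) = G (useq n)) :
    ∃ u : C(Set.Icc (0:ℝ) T, X),
      Filter.Tendsto useq Filter.atTop (nhds u) ∧ G u = u ∧
      (∀ v : C(Set.Icc (0:ℝ) T, X), G v = v → v = u) ∧
      ∀ t : Set.Icc (0:ℝ) T,
        (⨆ r : Set.Icc (0:ℝ) (t : ℝ), ‖u (Set.projIcc 0 T hT.le ↑r)‖) ≤ Ustar ↑t := by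
  have hK : Majorant T K := ⟨hKnn, hKint, hKae⟩
  have h0T : (0:ℝ) ∈ Icc 0 T := ⟨le_rfl, hT.le⟩
  have hTT : T ∈ Icc 0 T := ⟨hT.le, le_rfl⟩
  let S : C(Icc (0:ℝ) T, X) → ℝ → ℝ := runSup hT.le
  have hSm (u : C(Icc (0:ℝ) T, X)) : AEMeasurable (S u) (volume.restrict (Icc 0 T)) :=
    runSup_aemeasurable hT.le u _
  obtain ⟨C, hC⟩ : ∃ C, ∀ t ∈ Icc (0:ℝ) T, Ustar t ≤ C := by
    obtain ⟨C, hC⟩ := isCompact_Icc.bddAbove_image hUstarc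
    exact ⟨C, fun t ht => hC (mem_image_of_mem _ ht)⟩
  have hC0 : 0 ≤ C := (hUstarnn 0 h0T).trans (hC 0 h0T)
  have hUm := hUstarc.aemeasurable (μ := volume) measurableSet_Icc
  have hUmono : ∀ r ∈ Icc (0:ℝ) T, ∀ t ∈ Icc (0:ℝ) T, r ≤ t → Ustar r ≤ Ustar t := by
    intro r hr t ht hrt
    rw [ha2 r hr, ha2 t ht]
    gcongr
    exact hK.integral_mono hT hUm hUm hUstarnn (fun _ _ => le_rfl) hC hr.1 hrt ht.2
  -- The running supremum inherits pointwise bounds by `U*`, because `U*` is nondecreasing.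
  have hSU (u : C(Icc (0:ℝ) T, X)) (hu : ∀ t : Icc (0:ℝ) T, ‖u t‖ ≤ Ustar t) :
      ∀ t ∈ Icc (0:ℝ) T, S u t ≤ Ustar t := fun t ht =>
    runSup_le hT.le u ht.2 (hUstarnn t ht) fun r hr => (hu r).trans (hUmono r r.2 t ht hr)
  have hbd : ∀ n, ∀ t : Icc (0:ℝ) T, ‖useq n t‖ ≤ Ustar t := by
    intro n
    induction n with
    | zero =>
      intro t
      rw [h0, ha2 t t.2]
      have := hK.integral_nonneg hUstarnn t.2
      simp only [ContinuousMap.const_apply]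
      linarith
    | succ n ih =>
      intro t
      rw [hsucc, ha2 t t.2]
      refine (hGii _ t).trans ?_
      gcongr
      exact hK.integral_mono hT (hSm _) hUm (fun s _ => runSup_nonneg hT.le _ s)
        (hSU _ ih) hC t.2.1 le_rfl t.2.2
  have hnorm (n : ℕ) : ‖useq n‖ ≤ C :=
    (ContinuousMap.norm_le _ hC0).2 fun t => (hbd n t).trans (hC t t.2)
  have hSle (n m : ℕ) (t : ℝ) : S (useq n - useq m) t ≤ 2 * C := by
    have h1 := norm_sub_le (useq n) (useq m)
    have h2 := runSup_le_norm hT.le (useq n - useq m) t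
    linarith [hnorm n, hnorm m]
  let w : ℕ → ℝ → ℝ := fun k t => ⨆ p : ℕ × ℕ, S (useq (k + p.1) - useq (k + p.2)) t
  have hw_ge (k n m : ℕ) (hn : k ≤ n) (hm : k ≤ m) (t : ℝ) :
      S (useq n - useq m) t ≤ w k t := by
    have hb : BddAbove (range fun p : ℕ × ℕ => S (useq (k + p.1) - useq (k + p.2)) t) :=
      ⟨2 * C, by rintro _ ⟨p, rfl⟩; exact hSle _ _ t⟩
    have := le_ciSup hb (n - k, m - k)
    simpa only [Nat.add_sub_cancel' hn, Nat.add_sub_cancel' hm] using this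
  have hw0 (k : ℕ) (t : ℝ) : 0 ≤ w k t := Real.iSup_nonneg fun _ => runSup_nonneg hT.le _ t
  have hwM (k : ℕ) (t : ℝ) : w k t ≤ 2 * C := ciSup_le fun _ => hSle _ _ t
  have hwmono (k : ℕ) : Monotone (w k) := fun s t hst =>
    ciSup_le fun p => (runSup_mono hT.le _ hst).trans
      (hw_ge k _ _ (Nat.le_add_right _ _) (Nat.le_add_right _ _) t)
  have hwanti (t : ℝ) : Antitone fun k => w k t := fun k l hkl =>
    ciSup_le fun p => hw_ge k _ _ (by omega) (by omega) t
  have hwm (k : ℕ) : AEMeasurable (w k) (volume.restrict (Icc 0 T)) :=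
    (hwmono k).measurable.aemeasurable
  have hwstep (k : ℕ) : ∀ t ∈ Icc (0:ℝ) T, w (k + 1) t ≤ ∫ s in (0:ℝ)..t, K s (w k s) := by
    intro t ht
    refine ciSup_le fun p => runSup_le hT.le _ ht.2
      (hK.integral_nonneg (fun s _ => hw0 k s) ht) fun r hr => ?_
    have h1 : k + 1 + p.1 = (k + p.1) + 1 := by omega
    have h2 : k + 1 + p.2 = (k + p.2) + 1 := by omega
    rw [h1, h2, hsucc, hsucc]
    exact (hGi _ _ r).trans (hK.integral_mono hT (hSm (useq (k + p.1) - useq (k + p.2))) (hwm k)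
      (fun s _ => runSup_nonneg hT.le _ s)
      (fun s _ => hw_ge k _ _ (Nat.le_add_right _ _) (Nat.le_add_right _ _) s)
      (fun s _ => hwM k s) r.2.1 hr ht.2)
  let w' : ℝ → ℝ := fun t => ⨅ k, w k t
  have hbelow (t : ℝ) : BddBelow (range fun k => w k t) := ⟨0, by rintro _ ⟨k, rfl⟩; exact hw0 k t⟩
  have hwlim (t : ℝ) : Tendsto (fun k => w k t) atTop (𝓝 (w' t)) :=
    tendsto_atTop_ciInf (hwanti t) (hbelow t)
  have hw'le (t : ℝ) (k : ℕ) : w' t ≤ w k t := ciInf_le (hbelow t) k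
  have hw'mono : Monotone w' := fun s t hst =>
    le_ciInf fun k => (hw'le s k).trans (hwmono k hst)
  have hw'zero : w' T = 0 := by
    refine hK.eq_zero_of_le hT ha3 hw'mono.measurable.aemeasurable
      (fun s _ => le_ciInf fun k => hw0 k s) (fun s _ => (hw'le s 0).trans (hwM 0 s)) ?_ T hTT
    intro t ht
    exact ge_of_tendsto' (hK.tendsto_integral hwm (fun k s _ => hw0 k s) (fun k s _ => hwM k s)
      (fun s _ => hwlim s) ht) fun k => (hw'le t (k + 1)).trans (hwstep k t ht)
  have hcauchy : CauchySeq useq := by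
    refine cauchySeq_of_le_tendsto_0 (fun k => w k T) (fun n m k hn hm => ?_) (hw'zero ▸ hwlim T)
    rw [dist_eq_norm]
    exact (ContinuousMap.norm_le _ (hw0 k T)).2 fun t =>
      (norm_le_runSup hT.le _ t t.2.2).trans (hw_ge k n m hn hm T)
  obtain ⟨u, hu⟩ := cauchySeq_tendsto_of_complete hcauchy
  have hupt (t : Icc (0:ℝ) T) : Tendsto (fun n => useq n t) atTop (𝓝 (u t)) :=
    ((continuous_eval_const t).tendsto u).comp hu
  have hfix : G u = u := by
    ext t
    have hd : Tendsto (fun n => ‖useq n - u‖) atTop (𝓝 0) :=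
      tendsto_iff_norm_sub_tendsto_zero.1 hu
    have hint := hK.tendsto_integral (w := fun n => S (useq n - u)) (w' := fun _ => 0)
      (M := C + ‖u‖) (fun n => hSm _) (fun n s _ => runSup_nonneg hT.le _ s)
      (fun n s _ => (runSup_le_norm hT.le _ s).trans ((norm_sub_le _ _).trans (by
        gcongr; exact hnorm n)))
      (fun s _ => squeeze_zero (fun n => runSup_nonneg hT.le _ s)
        (fun n => runSup_le_norm hT.le _ s) hd) t.2
    have hzero : ∫ s in (0:ℝ)..t, K s 0 = 0 := by
      rw [intervalIntegral.integral_of_le t.2.1]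
      refine integral_eq_zero_of_ae ?_
      filter_upwards [ae_restrict_of_ae_restrict_of_subset
        (fun s hs => ⟨hs.1.le, hs.2.trans t.2.2⟩ : Ioc 0 (t : ℝ) ⊆ Icc 0 T) hKae] with s hs
      exact hs.2.2
    rw [hzero] at hint
    have hG : Tendsto (fun n => G (useq n) t) atTop (𝓝 (G u t)) :=
      tendsto_iff_norm_sub_tendsto_zero.2
        (squeeze_zero (fun _ => norm_nonneg _) (fun n => hGi (useq n) u t) hint)
    refine tendsto_nhds_unique hG ?_
    simp only [← hsucc]
    exact (hupt t).comp (tendsto_add_atTop_nat 1)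
  refine ⟨u, hu, hfix, fun v hv => ?_, fun t => ?_⟩
  · have hz : ∀ t ∈ Icc (0:ℝ) T, S (v - u) t = 0 := by
      refine hK.eq_zero_of_le hT ha3 (hSm _) (fun s _ => runSup_nonneg hT.le _ s)
        (fun s _ => runSup_le_norm hT.le _ s) fun t ht => ?_
      refine runSup_le hT.le _ ht.2
        (hK.integral_nonneg (fun s _ => runSup_nonneg hT.le (v - u) s) ht) fun r hr => ?_
      have h1 := hGi v u r
      rw [hv, hfix] at h1
      exact h1.trans (hK.integral_mono hT (hSm (v - u)) (hSm (v - u))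
        (fun s _ => runSup_nonneg hT.le _ s) (fun _ _ => le_rfl)
        (fun s _ => runSup_le_norm hT.le _ s) r.2.1 hr ht.2)
    ext t
    have := norm_le_runSup hT.le (v - u) t t.2.2
    rw [show runSup hT.le (v - u) T = 0 from hz T hTT] at this
    exact sub_eq_zero.1 (norm_le_zero_iff.1 this)
  · exact hSU u (fun r => le_of_tendsto' (hupt r).norm fun n => hbd n r) t t.2
end
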